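/- Let k be a natural number. There exists an s-extremal singly even self-dual [24k+8, 12k+4, 4k+2] code if and only if there exists a doubly even self-dual [24k+8, 12k+4, 4k+4] code whose covering radius equals 4k+2. -/

import Mathlib

open Finset

/-- Hamming weight of a binary vector. -/
def wt {n : ℕ} (x : Fin n → ZMod 2) : ℕ := hammingNorm x

/-- The dual of a set of binary vectors with respect to the standard inner product. -/
def dualSet {n : ℕ} (C : Set (Fin n → ZMod 2)) : Set (Fin n → ZMod 2) :=
  {x | ∀ y ∈ C, ∑ i, x i * y i = 0}

/-- A binary linear code is self-dual if it equals its dual code. -/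
def IsSelfDual {n : ℕ} (C : Submodule (ZMod 2) (Fin n → ZMod 2)) : Prop :=
  (C : Set (Fin n → ZMod 2)) = dualSet (C : Set (Fin n → ZMod 2))

/-- A self-dual code is singly even if some codeword has weight not divisible by 4. -/
def IsSinglyEvenSelfDual {n : ℕ} (C : Submodule (ZMod 2) (Fin n → ZMod 2)) : Prop :=
  IsSelfDual C ∧ ∃ x ∈ C, ¬ (4 ∣ wt x)

/-- The doubly even subcode `C₀` of `C` (as a set): codewords of weight ≡ 0 (mod 4). -/
def evenSub {n : ℕ} (C : Submodule (ZMod 2) (Fin n → ZMod 2)) : Set (Fin n → ZMod 2) :=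
  {x | x ∈ C ∧ 4 ∣ wt x}

/-- The shadow `S = C₀^⊥ \ C` of a singly even self-dual code. -/
def shadow {n : ℕ} (C : Submodule (ZMod 2) (Fin n → ZMod 2)) : Set (Fin n → ZMod 2) :=
  dualSet (evenSub C) \ (C : Set (Fin n → ZMod 2))

/-- The minimum (nonzero) weight of a set of vectors. -/
noncomputable def minWtSet {n : ℕ} (S : Set (Fin n → ZMod 2)) : ℕ :=
  sInf {w | ∃ x ∈ S, x ≠ 0 ∧ wt x = w}

/-- The minimum weight of a code. -/
noncomputable def minWt {n : ℕ} (C : Submodule (ZMod 2) (Fin n → ZMod 2)) : ℕ :=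
  minWtSet (C : Set (Fin n → ZMod 2))

/-- A singly even self-dual code of length `n` is s-extremal if
`d(S) = n/2 + 4 - 2 d(C)`. -/
def IsSExtremal {n : ℕ} (C : Submodule (ZMod 2) (Fin n → ZMod 2)) : Prop :=
  IsSinglyEvenSelfDual C ∧
    (minWtSet (shadow C) : ℤ) = ((n / 2 : ℕ) : ℤ) + 4 - 2 * (minWt C : ℤ)

/-- Two codes are equivalent if one is obtained from the other by permuting coordinates. -/
def CodeEquiv {n : ℕ} (C D : Submodule (ZMod 2) (Fin n → ZMod 2)) : Prop :=
  ∃ σ : Equiv.Perm (Fin n),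
    Submodule.map (LinearMap.funLeft (ZMod 2) (ZMod 2) σ) C = D

/-- The neighbor `C₀ ∪ (t + C₀)` of `C` obtained from a shadow vector `t`:
the span of the doubly even subcode together with `t`. -/
def neighborCode {n : ℕ} (C : Submodule (ZMod 2) (Fin n → ZMod 2))
    (t : Fin n → ZMod 2) : Submodule (ZMod 2) (Fin n → ZMod 2) :=
  Submodule.span (ZMod 2) (evenSub C ∪ {t})

/-- The covering radius of a code: the maximum over all vectors `x` of the distance
from `x` to the code. -/
noncomputable def coveringRadius {n : ℕ} (S : Set (Fin n → ZMod 2)) : ℕ :=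
  sSup (Set.range fun x : Fin n → ZMod 2 => sInf {d | ∃ c ∈ S, hammingDist x c = d})


section CodeAux

/-- sign character of `ZMod 2` -/
def sgn (R : Type) [CommRing R] (a : ZMod 2) : R := if a = 0 then 1 else -1

lemma sgn_zero (R : Type) [CommRing R] : sgn R 0 = 1 := by simp [sgn]

lemma sgn_add (R : Type) [CommRing R] (a b : ZMod 2) : sgn R (a + b) = sgn R a * sgn R b := by
  have h : ∀ a : ZMod 2, a = 0 ∨ a = 1 := by decide
  have h11 : (1 : ZMod 2) + 1 = 0 := by decide
  rcases h a with rfl | rfl <;> rcases h b with rfl | rfl <;> simp [sgn, h11]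

lemma sgn_sum (R : Type) [CommRing R] {ι : Type} (s : Finset ι) (f : ι → ZMod 2) :
    sgn R (∑ i ∈ s, f i) = ∏ i ∈ s, sgn R (f i) := by
  classical
  induction s using Finset.induction_on with
  | empty => simp [sgn]
  | insert a s ha ih => rw [Finset.sum_insert ha, Finset.prod_insert ha, sgn_add, ih]

lemma zmod2_cases (a : ZMod 2) : a = 0 ∨ a = 1 := by revert a; decide

lemma vadd_self {n : ℕ} (x : Fin n → ZMod 2) : x + x = 0 := by
  funext i; exact CharTwo.add_self_eq_zero _

lemma vadd_cancel {n : ℕ} (x y : Fin n → ZMod 2) : x + y + y = x := by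
  rw [add_assoc, vadd_self, add_zero]

lemma wt_eq_sum {n : ℕ} (x : Fin n → ZMod 2) : wt x = ∑ i, if x i = 0 then 0 else 1 := by
  simp only [wt, hammingNorm, Finset.card_filter]
  refine Finset.sum_congr rfl fun i _ => ?_
  by_cases h : x i = 0 <;> simp [h]

/-- size of the intersection of supports -/
def inter {n : ℕ} (x y : Fin n → ZMod 2) : ℕ := ∑ i, if x i * y i = 0 then 0 else 1

lemma wt_add {n : ℕ} (x y : Fin n → ZMod 2) : wt (x + y) + 2 * inter x y = wt x + wt y := by
  simp only [wt_eq_sum, inter, Finset.mul_sum, ← Finset.sum_add_distrib, Pi.add_apply]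
  refine Finset.sum_congr rfl fun i _ => ?_
  have h11 : (1 : ZMod 2) + 1 = 0 := by decide
  rcases zmod2_cases (x i) with h | h <;> rcases zmod2_cases (y i) with h' | h' <;>
    simp [h, h', h11]

lemma inter_cast {n : ℕ} (x y : Fin n → ZMod 2) : ((inter x y : ℕ) : ZMod 2) = x ⬝ᵥ y := by
  simp only [inter, dotProduct, Nat.cast_sum]
  refine Finset.sum_congr rfl fun i _ => ?_
  generalize x i = a
  generalize y i = b
  revert a b; decide

lemma wt_cast {n : ℕ} (x : Fin n → ZMod 2) : ((wt x : ℕ) : ZMod 2) = x ⬝ᵥ x := by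
  simp only [wt_eq_sum, dotProduct, Nat.cast_sum]
  refine Finset.sum_congr rfl fun i _ => ?_
  generalize x i = a
  revert a; decide

lemma wt_cast_one {n : ℕ} (x : Fin n → ZMod 2) : ((wt x : ℕ) : ZMod 2) = x ⬝ᵥ 1 := by
  simp only [wt_eq_sum, dotProduct, Nat.cast_sum, Pi.one_apply, mul_one]
  refine Finset.sum_congr rfl fun i _ => ?_
  generalize x i = a
  revert a; decide

lemma wt_one {n : ℕ} : wt (1 : Fin n → ZMod 2) = n := by
  simp [wt_eq_sum]

lemma wt_zero {n : ℕ} : wt (0 : Fin n → ZMod 2) = 0 := by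
  simp [wt_eq_sum]

lemma wt_compl {n : ℕ} (x : Fin n → ZMod 2) : wt (x + 1) + wt x = n := by
  have h : n = ∑ i : Fin n, 1 := by simp
  conv_rhs => rw [h]
  simp only [wt_eq_sum, ← Finset.sum_add_distrib, Pi.add_apply, Pi.one_apply]
  refine Finset.sum_congr rfl fun i _ => ?_
  have h11 : (1 : ZMod 2) + 1 = 0 := by decide
  rcases zmod2_cases (x i) with h | h <;> simp [h, h11]

lemma wt_eq_zero {n : ℕ} {x : Fin n → ZMod 2} : wt x = 0 ↔ x = 0 := hammingNorm_eq_zero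

lemma dist_eq {n : ℕ} (x y : Fin n → ZMod 2) : hammingDist x y = wt (x + y) := by
  rw [hammingDist_eq_hammingNorm, wt]
  congr 1
  funext i
  simp [CharTwo.neg_eq, sub_eq_add_neg]

lemma even_iff_cast (m : ℕ) : ((m : ℕ) : ZMod 2) = 0 ↔ 2 ∣ m := ZMod.natCast_eq_zero_iff m 2

lemma selfDual_mem {n : ℕ} {D : Submodule (ZMod 2) (Fin n → ZMod 2)} (h : IsSelfDual D)
    (z : Fin n → ZMod 2) : z ∈ D ↔ ∀ y ∈ D, z ⬝ᵥ y = 0 := by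
  have := Set.ext_iff.mp h z
  exact this

lemma selfDual_even {n : ℕ} {D : Submodule (ZMod 2) (Fin n → ZMod 2)} (h : IsSelfDual D)
    {z : Fin n → ZMod 2} (hz : z ∈ D) : 2 ∣ wt z := by
  rw [← even_iff_cast, wt_cast]
  exact (selfDual_mem h z).1 hz z hz

lemma selfDual_one {n : ℕ} {D : Submodule (ZMod 2) (Fin n → ZMod 2)} (h : IsSelfDual D) :
    (1 : Fin n → ZMod 2) ∈ D := by
  rw [selfDual_mem h]
  intro y hy
  rw [dotProduct_comm, ← wt_cast_one, even_iff_cast]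
  exact selfDual_even h hy

/-- dual of `D ∩ x^⊥` is `D ∪ (x + D)` -/
lemma dual_hyper {n : ℕ} {D : Submodule (ZMod 2) (Fin n → ZMod 2)} (h : IsSelfDual D)
    (x z : Fin n → ZMod 2) (hz : ∀ y ∈ D, x ⬝ᵥ y = 0 → z ⬝ᵥ y = 0) : z ∈ D ∨ z + x ∈ D := by
  by_cases hzD : z ∈ D
  · exact Or.inl hzD
  right
  rw [selfDual_mem h] at hzD
  push Not at hzD
  obtain ⟨y, hy, hzy⟩ := hzD
  have hxy : x ⬝ᵥ y = 1 := (zmod2_cases _).resolve_left fun h0 => hzy (hz y hy h0)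
  have hzy1 : z ⬝ᵥ y = 1 := (zmod2_cases _).resolve_left hzy
  rw [selfDual_mem h]
  intro d hd
  rw [add_dotProduct]
  rcases zmod2_cases (x ⬝ᵥ d) with h0 | h1
  · rw [h0, hz d hd h0]; rfl
  · have := hz (d + y) (D.add_mem hd hy) (by rw [dotProduct_add, h1, hxy]; rfl)
    rw [dotProduct_add, hzy1] at this
    rw [h1, this]

/-- The neighbour of `D` with respect to `x`. -/
def nbr {n : ℕ} (D : Submodule (ZMod 2) (Fin n → ZMod 2)) (x : Fin n → ZMod 2) :
    Submodule (ZMod 2) (Fin n → ZMod 2) where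
  carrier := {c | x ⬝ᵥ c = 0 ∧ (c ∈ D ∨ c + x ∈ D)}
  zero_mem' := ⟨by simp, Or.inl D.zero_mem⟩
  add_mem' := by
    rintro a b ⟨ha, ha'⟩ ⟨hb, hb'⟩
    refine ⟨by rw [dotProduct_add, ha, hb, add_zero], ?_⟩
    rcases ha' with ha' | ha' <;> rcases hb' with hb' | hb'
    · exact Or.inl (D.add_mem ha' hb')
    · right; rw [add_assoc]; exact D.add_mem ha' hb'
    · right; rw [add_right_comm]; exact D.add_mem ha' hb'
    · left
      have := D.add_mem ha' hb'
      rwa [add_add_add_comm, vadd_self, add_zero] at this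
  smul_mem' := by
    rintro c a ⟨ha, ha'⟩
    rcases zmod2_cases c with rfl | rfl
    · rw [zero_smul]; exact ⟨by simp, Or.inl D.zero_mem⟩
    · rw [one_smul]; exact ⟨ha, ha'⟩

lemma mem_nbr {n : ℕ} (D : Submodule (ZMod 2) (Fin n → ZMod 2)) (x c : Fin n → ZMod 2) :
    c ∈ nbr D x ↔ x ⬝ᵥ c = 0 ∧ (c ∈ D ∨ c + x ∈ D) := Iff.rfl

lemma nbr_selfDual {n : ℕ} {D : Submodule (ZMod 2) (Fin n → ZMod 2)} (h : IsSelfDual D)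
    (x : Fin n → ZMod 2) (hx : x ⬝ᵥ x = 0) : IsSelfDual (nbr D x) := by
  apply Set.ext
  intro z
  change z ∈ nbr D x ↔ ∀ y ∈ nbr D x, z ⬝ᵥ y = 0
  have key := fun z => (selfDual_mem h z).1
  constructor
  · rintro ⟨hz, hz'⟩ y ⟨hy, hy'⟩
    have hzx : z ⬝ᵥ x = 0 := by rw [dotProduct_comm, hz]
    rcases hz' with hz' | hz' <;> rcases hy' with hy' | hy'
    · exact key z hz' y hy'
    · have := key z hz' _ hy'
      rwa [dotProduct_add, hzx, add_zero] at this
    · have := key _ hz' _ hy'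
      rwa [add_dotProduct, hy, add_zero] at this
    · have := key _ hz' _ hy'
      rwa [dotProduct_add, add_dotProduct, add_dotProduct, hy, hx, hzx, add_zero, add_zero,
        add_zero] at this
  · intro hz
    have hzx : z ⬝ᵥ x = 0 := hz x ⟨hx, Or.inr (by rw [vadd_self]; exact D.zero_mem)⟩
    refine ⟨by rw [dotProduct_comm, hzx], ?_⟩
    exact dual_hyper h x z fun y hy hxy => hz y ⟨hxy, Or.inl hy⟩

open Classical in
lemma orth_sum (R : Type) [CommRing R] [IsDomain R] [CharZero R] {n : ℕ}
    {D : Submodule (ZMod 2) (Fin n → ZMod 2)} (h : IsSelfDual D) (z : Fin n → ZMod 2) :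
    ∑ y : D, sgn R (z ⬝ᵥ y.1) = if z ∈ D then (Fintype.card D : R) else 0 := by
  split_ifs with hz
  · rw [selfDual_mem h] at hz
    simp [fun y : D => hz y.1 y.2, sgn_zero]
  · rw [selfDual_mem h] at hz
    push Not at hz
    obtain ⟨y, hy, hzy⟩ := hz
    have h1 : sgn R (z ⬝ᵥ y) = -1 := by simp [sgn, hzy]
    have : ∑ y : D, sgn R (z ⬝ᵥ y.1) = ∑ y' : D, sgn R (z ⬝ᵥ (y' + (⟨y, hy⟩ : D)).1) :=
      (Equiv.sum_comp (Equiv.addRight (⟨y, hy⟩ : D)) fun y : D => sgn R (z ⬝ᵥ y.1)).symm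
    simp only [Submodule.coe_add, dotProduct_add, sgn_add, h1, mul_neg, mul_one,
      Finset.sum_neg_distrib] at this
    exact CharZero.eq_neg_self_iff.mp this

lemma prod_expand {R : Type} [CommRing R] {n : ℕ} (y : Fin n → ZMod 2) (t : R) :
    (1 + t) ^ (n - wt y) * (1 - t) ^ (wt y) = ∑ z : Fin n → ZMod 2, sgn R (z ⬝ᵥ y) * t ^ wt z := by
  have h1 : ∀ z : Fin n → ZMod 2, sgn R (z ⬝ᵥ y) * t ^ wt z
      = ∏ i, (sgn R (z i * y i) * t ^ (if z i = 0 then 0 else 1)) := by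
    intro z
    rw [Finset.prod_mul_distrib, Finset.prod_pow_eq_pow_sum, ← wt_eq_sum, dotProduct, sgn_sum]
  simp only [h1]
  have h2 := Finset.prod_univ_sum (fun _ : Fin n => (Finset.univ : Finset (ZMod 2)))
    (fun i a => sgn R (a * y i) * t ^ (if a = 0 then 0 else 1))
  rw [Fintype.piFinset_univ] at h2
  rw [← h2]
  have h3 : ∀ i, (∑ a : ZMod 2, sgn R (a * y i) * t ^ (if a = 0 then 0 else 1))
      = (1 + t) ^ (if y i + 1 = 0 then 0 else 1) * (1 - t) ^ (if y i = 0 then 0 else 1) := by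
    intro i
    have hs : ∀ f : ZMod 2 → R, ∑ a, f a = f 0 + f 1 := fun f => Fin.sum_univ_two f
    have h11 : (1 : ZMod 2) + 1 = 0 := by decide
    rw [hs]
    rcases zmod2_cases (y i) with h | h <;> simp [h, sgn, h11] <;> ring
  simp only [h3]
  rw [Finset.prod_mul_distrib, Finset.prod_pow_eq_pow_sum, Finset.prod_pow_eq_pow_sum]
  have := wt_compl y
  rw [show n - wt y = wt (y + 1) by omega, wt_eq_sum (y + 1), wt_eq_sum y]
  rfl

open Classical in
lemma macWilliams (R : Type) [CommRing R] [IsDomain R] [CharZero R] {n : ℕ}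
    {D : Submodule (ZMod 2) (Fin n → ZMod 2)} (h : IsSelfDual D) (x : Fin n → ZMod 2) (t : R) :
    ∑ y : D, sgn R (x ⬝ᵥ y.1) * ((1 + t) ^ (n - wt y.1) * (1 - t) ^ (wt y.1))
      = (Fintype.card D : R) * ∑ c : D, t ^ wt (x + c.1) := by
  simp only [prod_expand, Finset.mul_sum]
  rw [Finset.sum_comm]
  have h1 : ∀ z : Fin n → ZMod 2, ∑ y : D, sgn R (x ⬝ᵥ y.1) * (sgn R (z ⬝ᵥ y.1) * t ^ wt z)
      = if x + z ∈ D then (Fintype.card D : R) * t ^ wt z else 0 := by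
    intro z
    have := orth_sum R h (x + z)
    simp only [← mul_assoc, ← sgn_add, ← add_dotProduct]
    rw [← Finset.sum_mul, this, ite_mul, zero_mul]
  simp only [h1]
  rw [← Equiv.sum_comp (Equiv.addLeft x)]
  simp only [Equiv.coe_addLeft, ← add_assoc, vadd_self, zero_add]
  rw [← Finset.sum_filter]
  exact Finset.sum_subtype (p := fun z => z ∈ D) _ (fun z => by simp) _

lemma selfDual_finrank {n : ℕ} {D : Submodule (ZMod 2) (Fin n → ZMod 2)} (h : IsSelfDual D) :
    2 * Module.finrank (ZMod 2) D = n := by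
  classical
  have := macWilliams ℤ h 0 1
  have hc := Module.card_eq_pow_finrank (K := ZMod 2) (V := D)
  simp only [zero_dotProduct, sgn_zero, one_mul, sub_self, zero_add, one_pow] at this
  rw [Finset.sum_eq_single (0 : D)] at this
  · rw [Submodule.coe_zero, wt_zero] at this
    simp only [Finset.sum_const, Finset.card_univ, hc, ZMod.card] at this
    norm_num at this
    rw [← pow_add] at this
    have := pow_right_injective₀ (a := (2 : ℤ)) (by norm_num) (by norm_num) this
    omega
  · intro b _ hb
    rw [zero_pow, mul_zero]
    rw [Ne, wt_eq_zero]
    exact fun h => hb (Subtype.ext h)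
  · simp

/-- Delsarte bound. -/
lemma delsarte {n : ℕ} {D : Submodule (ZMod 2) (Fin n → ZMod 2)} (h : IsSelfDual D)
    (L : Finset ℕ) (hL0 : 0 ∉ L) (hL : ∀ y ∈ D, y ≠ 0 → wt y ∈ L) (x : Fin n → ZMod 2) :
    ∃ c ∈ D, wt (x + c) ≤ L.card := by
  classical
  by_contra hcon
  push Not at hcon
  have key : ∀ M : Finset ℕ, ∀ z : Fin n → ZMod 2, wt z + M.card ≤ L.card →
      ∑ y : D, sgn ℚ ((x + z) ⬝ᵥ y.1) * ∏ w ∈ M, ((wt y.1 : ℚ) - w) = 0 := by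
    intro M
    induction M using Finset.induction_on with
    | empty =>
      intro z hz
      simp only [Finset.prod_empty, mul_one, orth_sum ℚ h]
      rw [if_neg]
      intro hxz
      have := hcon _ hxz
      rw [← add_assoc, vadd_self, zero_add] at this
      simp at hz
      omega
    | insert w M hw ih =>
      intro z hz
      rw [Finset.card_insert_of_notMem hw] at hz
      have hwt : ∀ y : Fin n → ZMod 2,
          ((wt y : ℚ) - w) = ((n : ℚ) / 2 - w) - ∑ i, sgn ℚ (y i) / 2 := by
        intro y
        have : (wt y : ℚ) = ∑ i : Fin n, (1 / 2 - sgn ℚ (y i) / 2) := by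
          rw [wt_eq_sum]; push_cast
          refine Finset.sum_congr rfl fun i _ => ?_
          by_cases hi : y i = 0 <;> simp [sgn, hi]; norm_num
        rw [this, Finset.sum_sub_distrib]
        simp; ring
      have hstep : ∀ y : Fin n → ZMod 2,
          sgn ℚ ((x + z) ⬝ᵥ y) * ∏ w ∈ insert w M, ((wt y : ℚ) - w)
          = ((n : ℚ) / 2 - w) * (sgn ℚ ((x + z) ⬝ᵥ y) * ∏ w ∈ M, ((wt y : ℚ) - w))
            - ∑ i, (sgn ℚ ((x + (z + Pi.single i 1)) ⬝ᵥ y) * ∏ w ∈ M, ((wt y : ℚ) - w)) / 2 := by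
        intro y
        have e : ∀ i, sgn ℚ ((x + (z + Pi.single i 1)) ⬝ᵥ y)
            = sgn ℚ ((x + z) ⬝ᵥ y) * sgn ℚ (y i) := by
          intro i
          rw [← add_assoc, add_dotProduct, sgn_add, single_dotProduct, one_mul]
        simp only [e]
        rw [Finset.prod_insert hw, hwt y]
        generalize ∏ w ∈ M, ((wt y : ℚ) - w) = P
        have : ∑ i, sgn ℚ ((x + z) ⬝ᵥ y) * sgn ℚ (y i) * P / 2
            = sgn ℚ ((x + z) ⬝ᵥ y) * P * ∑ i, sgn ℚ (y i) / 2 := by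
          rw [Finset.mul_sum]
          exact Finset.sum_congr rfl fun i _ => by ring
        rw [this]; ring
      simp only [hstep]
      rw [Finset.sum_sub_distrib, ← Finset.mul_sum, ih z (by omega), Finset.sum_comm, mul_zero,
        zero_sub, neg_eq_zero]
      refine Finset.sum_eq_zero fun i _ => ?_
      rw [← Finset.sum_div, ih, zero_div]
      have h1 := wt_add z (Pi.single i 1)
      have h2 : wt (Pi.single i 1 : Fin n → ZMod 2) = 1 := by
        rw [wt_eq_sum, Finset.sum_eq_single i] <;> simp +contextual [Pi.single_apply]
      omega
  have := key L 0 (by rw [wt_zero]; omega)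
  rw [Finset.sum_eq_single (0 : D)] at this
  · rw [Submodule.coe_zero, dotProduct_zero, sgn_zero, one_mul, wt_zero, Finset.prod_eq_zero_iff]
      at this
    obtain ⟨w, hw, hw0⟩ := this
    simp at hw0
    exact hL0 (hw0 ▸ hw)
  · intro y _ hy
    have hy0 : y.1 ≠ 0 := fun h => hy (Subtype.ext h)
    rw [Finset.prod_eq_zero (hL y.1 y.2 hy0) (sub_self _), mul_zero]
  · simp

end CodeAux

section SeriesAux

/-- span of the symmetric forms of degree `2 N` -/
def symSpan {A : Type} [CommRing A] [Algebra ℚ A] (u v : A) (N : ℕ) : Submodule ℚ A :=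
  Submodule.span ℚ {f | ∃ j ≤ N, f = ((u - v) ^ 2) ^ j * (u * v) ^ (N - j)}

lemma symSpan_mul_prod {A : Type} [CommRing A] [Algebra ℚ A] (u v : A) (N : ℕ) {f : A}
    (hf : f ∈ symSpan u v N) : (u * v) * f ∈ symSpan u v (N + 1) := by
  unfold symSpan at hf
  induction hf using Submodule.span_induction with
  | mem f hf =>
    obtain ⟨j, hj, rfl⟩ := hf
    refine Submodule.subset_span ⟨j, by omega, ?_⟩
    rw [show N + 1 - j = (N - j) + 1 by omega]; ring
  | zero => rw [mul_zero]; exact Submodule.zero_mem _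
  | add f g _ _ hf hg => rw [mul_add]; exact Submodule.add_mem _ hf hg
  | smul c f _ hf => rw [mul_smul_comm]; exact Submodule.smul_mem _ _ hf

lemma symSpan_mul_sub {A : Type} [CommRing A] [Algebra ℚ A] (u v : A) (N : ℕ) {f : A}
    (hf : f ∈ symSpan u v N) : (u - v) ^ 2 * f ∈ symSpan u v (N + 1) := by
  unfold symSpan at hf
  induction hf using Submodule.span_induction with
  | mem f hf =>
    obtain ⟨j, hj, rfl⟩ := hf
    refine Submodule.subset_span ⟨j + 1, by omega, ?_⟩
    rw [show N + 1 - (j + 1) = N - j by omega]; ring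
  | zero => rw [mul_zero]; exact Submodule.zero_mem _
  | add f g _ _ hf hg => rw [mul_add]; exact Submodule.add_mem _ hf hg
  | smul c f _ hf => rw [mul_smul_comm]; exact Submodule.smul_mem _ _ hf

lemma symSpan_pow {A : Type} [CommRing A] [Algebra ℚ A] (u v : A) (N : ℕ) :
    u ^ (2 * N) + v ^ (2 * N) ∈ symSpan u v N := by
  induction N using Nat.twoStepInduction with
  | zero =>
    have : (1 : A) ∈ symSpan u v 0 := Submodule.subset_span ⟨0, le_rfl, by simp⟩
    simpa using Submodule.add_mem _ this this
  | one =>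
    have h : (1 : A) ∈ symSpan u v 0 := Submodule.subset_span ⟨0, le_rfl, by simp⟩
    have h1 := symSpan_mul_prod u v 0 h
    have h2 := symSpan_mul_sub u v 0 h
    have := Submodule.add_mem _ h2 (Submodule.add_mem _ h1 h1)
    convert this using 1
    ring
  | more N h0 h1 =>
    have a1 := symSpan_mul_prod u v _ h1
    have a2 := symSpan_mul_sub u v _ h1
    have a0 := symSpan_mul_prod u v _ (symSpan_mul_prod u v _ h0)
    have := Submodule.sub_mem _ (Submodule.add_mem _ a2 (Submodule.add_mem _ a1 a1)) a0
    convert this using 1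
    ring

lemma symSpan_mono {A : Type} [CommRing A] [Algebra ℚ A] (u v : A) (N a b : ℕ)
    (h : a + b = 2 * N) : u ^ a * v ^ b + u ^ b * v ^ a ∈ symSpan u v N := by
  have base : ∀ c d : ℕ, (u * v) ^ c * (u ^ (2 * d) + v ^ (2 * d)) ∈ symSpan u v (c + d) := by
    intro c d
    induction c with
    | zero => simpa using symSpan_pow u v d
    | succ c ih =>
      have := symSpan_mul_prod u v _ ih
      rw [show c + 1 + d = c + d + 1 by omega]
      convert this using 1
      ring
  rcases le_total a b with hab | hab
  · obtain ⟨d, rfl⟩ : ∃ d, b = a + 2 * d := ⟨(b - a) / 2, by omega⟩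
    have := base a d
    rw [show N = a + d by omega]
    convert this using 1
    ring
  · obtain ⟨d, rfl⟩ : ∃ d, a = b + 2 * d := ⟨(a - b) / 2, by omega⟩
    have := base b d
    rw [show N = b + d by omega]
    convert this using 1
    ring

open PowerSeries in
/-- The series `1 / (1 - X ^ 4)`. -/
noncomputable def cSer : ℚ⟦X⟧ := PowerSeries.mk fun n => if 4 ∣ n then 1 else 0

open PowerSeries in
lemma cSer_mul : cSer * (1 - X ^ 4) = 1 := by
  ext n
  rw [mul_sub, mul_one, map_sub, coeff_mul_X_pow', coeff_one]
  simp only [cSer, coeff_mk]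
  rcases lt_or_ge n 4 with h | h
  · interval_cases n <;> simp
  · have : 4 ∣ n - 4 ↔ 4 ∣ n := by omega
    simp [this, h, show n ≠ 0 by omega]

open PowerSeries in
/-- Nonnegative coefficients, with positive constant term. -/
def NonnegSer (f : ℚ⟦X⟧) : Prop := (∀ n, 0 ≤ coeff n f) ∧ 0 < coeff 0 f

open PowerSeries in
lemma NonnegSer.le_mul {f g : ℚ⟦X⟧} (hf : NonnegSer f) (hg : NonnegSer g) (n : ℕ) :
    coeff n f * coeff 0 g ≤ coeff n (f * g) := by
  rw [coeff_mul]
  exact Finset.single_le_sum (f := fun p : ℕ × ℕ => coeff p.1 f * coeff p.2 g)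
    (fun p _ => mul_nonneg (hf.1 _) (hg.1 _)) (a := (n, 0)) (by simp)

lemma NonnegSer.mul {f g : PowerSeries ℚ} (hf : NonnegSer f) (hg : NonnegSer g) :
    NonnegSer (f * g) :=
  ⟨fun n => le_trans (mul_nonneg (hf.1 _) hg.2.le) (hf.le_mul hg n),
    lt_of_lt_of_le (mul_pos hf.2 hg.2) (hf.le_mul hg 0)⟩

lemma nonnegSer_one : NonnegSer 1 :=
  ⟨fun n => by rw [PowerSeries.coeff_one]; split_ifs <;> norm_num, by simp⟩

lemma NonnegSer.pow {f : PowerSeries ℚ} (hf : NonnegSer f) (m : ℕ) : NonnegSer (f ^ m) := by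
  induction m with
  | zero => rw [pow_zero]; exact nonnegSer_one
  | succ m ih => rw [pow_succ]; exact ih.mul hf

lemma nonnegSer_c : NonnegSer cSer :=
  ⟨fun n => by simp only [cSer, PowerSeries.coeff_mk]; split_ifs <;> norm_num,
    by simp [cSer, -PowerSeries.coeff_zero_eq_constantCoeff]⟩

open PowerSeries in
lemma nonnegSer_poly : NonnegSer (1 + 6 * X ^ 2 + X ^ 4) := by
  constructor
  · intro n
    have h6 : (6 : ℚ⟦X⟧) = C (6 : ℚ) := (map_ofNat C 6).symm
    rw [h6, map_add, map_add, coeff_C_mul, coeff_X_pow, coeff_X_pow, coeff_one]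
    split_ifs <;> norm_num
  · simp

open PowerSeries in
lemma nonnegSer_poly2 : NonnegSer (1 + X ^ 2) := by
  constructor
  · intro n
    rw [map_add, coeff_X_pow, coeff_one]
    split_ifs <;> norm_num
  · simp

open PowerSeries in
/-- residue of a derivative vanishes -/
lemma coeff_res (m : ℕ) (f : ℚ⟦X⟧) : coeff m ((m : ℚ⟦X⟧) * f - X * derivative ℚ f) = 0 := by
  have hm : (m : ℚ⟦X⟧) = C (m : ℚ) := (map_natCast C m).symm
  rw [map_sub, hm, coeff_C_mul]
  cases m with
  | zero => simp
  | succ m =>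
    rw [mul_comm X, coeff_succ_mul_X, coeff_derivative]
    push_cast; ring

open PowerSeries in
lemma exists_functional (k : ℕ) : ∃ H : ℚ⟦X⟧, 0 < coeff (4 * k) H ∧
    ∀ a b, a + b + 2 = 4 * k → coeff (4 * k) ((1 - X ^ 2) ^ (4 * k + 8) *
      (((1 + X) ^ 4) ^ a * ((1 - X) ^ 4) ^ b + ((1 + X) ^ 4) ^ b * ((1 - X) ^ 4) ^ a) * H) = 0 := by
  set p : ℚ⟦X⟧ := cSer * (1 + X ^ 2) with hp
  set q : ℚ⟦X⟧ := cSer * (1 - X ^ 2) with hq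
  have hp1 : (1 - X ^ 2) * p = 1 := by
    rw [hp]; linear_combination cSer_mul
  have hq1 : (1 + X ^ 2) * q = 1 := by
    rw [hq]; linear_combination cSer_mul
  have hpq : cSer = p * q := by
    have h1 : cSer = cSer * ((1 - X ^ 2) * p) * ((1 + X ^ 2) * q) := by
      rw [hp1, hq1]; ring
    have h2 : cSer * ((1 - X ^ 2) * p) * ((1 + X ^ 2) * q) = (cSer * (1 - X ^ 4)) * (p * q) := by
      ring
    rw [h1, h2, cSer_mul, one_mul]
  refine ⟨cSer * (cSer ^ (4 * k) * (p ^ 4 * (1 + 6 * X ^ 2 + X ^ 4))), ?_, ?_⟩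
  · have hg : NonnegSer (cSer ^ (4 * k) * (p ^ 4 * (1 + 6 * X ^ 2 + X ^ 4))) :=
      (nonnegSer_c.pow _).mul (((nonnegSer_c.mul nonnegSer_poly2).pow 4).mul nonnegSer_poly)
    refine lt_of_lt_of_le (mul_pos ?_ hg.2) (nonnegSer_c.le_mul hg _)
    simp [cSer]
  · intro a b hab
    clear_value p q
    set H := cSer * (cSer ^ (4 * k) * (p ^ 4 * (1 + 6 * X ^ 2 + X ^ 4))) with hH
    have hmem := symSpan_mono ((1 + X : ℚ⟦X⟧) ^ 4) ((1 - X) ^ 4) (2 * k - 1) a b (by omega)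
    unfold symSpan at hmem
    generalize ((1 + X : ℚ⟦X⟧) ^ 4) ^ a * ((1 - X) ^ 4) ^ b + ((1 + X) ^ 4) ^ b * ((1 - X) ^ 4) ^ a
      = f at hmem ⊢
    induction hmem using Submodule.span_induction with
    | zero => simp
    | add f g _ _ hf hg => rw [mul_add, add_mul, map_add, hf, hg, add_zero]
    | smul c f _ hf => rw [mul_smul_comm, smul_mul_assoc, coeff_smul, hf, smul_zero]
    | mem f hf =>
      obtain ⟨j, hj, rfl⟩ := hf
      obtain ⟨l, hl⟩ : ∃ l, 2 * k = j + l + 1 := ⟨2 * k - 1 - j, by omega⟩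
      -- m = 2 (l + 1)
      have dq : derivative ℚ q = - (2 * X * q ^ 2) := by
        have h := congrArg (derivative ℚ) hq1
        simp only [Derivation.leibniz, map_add, Derivation.leibniz_pow, derivative_X, smul_eq_mul,
          Derivation.map_one_eq_zero] at h
        simp at h
        linear_combination q * h - derivative ℚ q * hq1
      have hres := coeff_res (2 * (l + 1)) (((1 - X ^ 2) ^ 2 * q) ^ (2 * (l + 1)))
      have e : ((2 * (l + 1) : ℕ) : ℚ⟦X⟧) * (((1 - X ^ 2) ^ 2 * q) ^ (2 * (l + 1)))
          - X * derivative ℚ (((1 - X ^ 2) ^ 2 * q) ^ (2 * (l + 1)))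
          = ((2 * (l + 1) : ℕ) : ℚ⟦X⟧) * ((1 - X ^ 2) ^ (4 * l + 3) * q ^ (2 * l + 3)
            * (1 + 6 * X ^ 2 + X ^ 4)) := by
        have hloc : (1 - X ^ 2) ^ 2 * q + 4 * X ^ 2 * (1 - X ^ 2) * q
            + 2 * X ^ 2 * (1 - X ^ 2) ^ 2 * q ^ 2
            = (1 - X ^ 2) * q ^ 2 * (1 + 6 * X ^ 2 + X ^ 4) := by
          linear_combination (-((1 - X ^ 2) * q * (1 - X ^ 2 + 4 * X ^ 2))) * hq1
        have hd : derivative ℚ (((1 - X ^ 2) ^ 2 * q) ^ (2 * (l + 1)))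
            = ((2 * (l + 1) : ℕ) : ℚ⟦X⟧) * ((1 - X ^ 2) ^ 2 * q) ^ (2 * l + 1)
              * (-(4 * X * (1 - X ^ 2) * q) - (1 - X ^ 2) ^ 2 * (2 * X * q ^ 2)) := by
          rw [Derivation.leibniz_pow, Derivation.leibniz, Derivation.leibniz_pow, dq, map_sub,
            Derivation.leibniz_pow, derivative_X, Derivation.map_one_eq_zero,
            show 2 * (l + 1) - 1 = 2 * l + 1 by omega]
          simp only [smul_eq_mul, nsmul_eq_mul]
          push_cast
          ring
        rw [hd]
        have h3 : ((2 * (l + 1) : ℕ) : ℚ⟦X⟧) * ((1 - X ^ 2) ^ (4 * l + 3) * q ^ (2 * l + 3)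
            * (1 + 6 * X ^ 2 + X ^ 4)) = ((2 * (l + 1) : ℕ) : ℚ⟦X⟧) *
            ((1 - X ^ 2) ^ 2 * q) ^ (2 * l + 1) * ((1 - X ^ 2) * q ^ 2 * (1 + 6 * X ^ 2 + X ^ 4)) := by
          generalize (1 - X ^ 2 : ℚ⟦X⟧) = s
          generalize (1 + 6 * X ^ 2 + X ^ 4 : ℚ⟦X⟧) = P
          generalize ((2 * (l + 1) : ℕ) : ℚ⟦X⟧) = c
          rw [mul_pow, ← pow_mul]
          ring
        rw [h3, ← hloc]
        generalize (1 - X ^ 2 : ℚ⟦X⟧) = s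
        generalize ((2 * (l + 1) : ℕ) : ℚ⟦X⟧) = c
        rw [show 2 * (l + 1) = 2 * l + 1 + 1 by ring, pow_succ]
        generalize (s ^ 2 * q) ^ (2 * l + 1) = W
        ring
      have e2 : (1 - X ^ 2) ^ (4 * k + 8) * ((((1 + X : ℚ⟦X⟧) ^ 4 - (1 - X) ^ 4) ^ 2) ^ j *
          ((1 + X) ^ 4 * (1 - X) ^ 4) ^ (2 * k - 1 - j)) * H
          = X ^ (2 * j) * (C ((64 : ℚ) ^ j) * ((1 - X ^ 2) ^ (4 * l + 3) * q ^ (2 * l + 3)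
            * (1 + 6 * X ^ 2 + X ^ 4))) := by
        have a1 : ((1 + X : ℚ⟦X⟧) ^ 4 - (1 - X) ^ 4) ^ 2 = 64 * X ^ 2 * (1 + X ^ 2) ^ 2 := by ring
        have a2 : ((1 + X : ℚ⟦X⟧) ^ 4 * (1 - X) ^ 4) = (1 - X ^ 2) ^ 4 := by ring
        have a3 : (C ((64 : ℚ) ^ j) : ℚ⟦X⟧) = 64 ^ j := by rw [map_pow]; congr 1
        have a4 : 4 * k = 2 * j + 2 * l + 2 := by omega
        rw [a1, a2, a3, hH, show 2 * k - 1 - j = l by omega, a4, hpq]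
        generalize (1 - X ^ 2 : ℚ⟦X⟧) = s at hp1 ⊢
        generalize (1 + X ^ 2 : ℚ⟦X⟧) = r at hq1 ⊢
        generalize (1 + 6 * X ^ 2 + X ^ 4 : ℚ⟦X⟧) = P
        have a5 : X ^ (2 * j) * (64 ^ j * (s ^ (4 * l + 3) * q ^ (2 * l + 3) * P))
            = X ^ (2 * j) * (64 ^ j * (s ^ (4 * l + 3) * q ^ (2 * l + 3) * P))
              * (s * p) ^ (2 * j + 2 * l + 7) * (r * q) ^ (2 * j) := by
          rw [hp1, hq1, one_pow, one_pow, mul_one, mul_one]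
        rw [a5]
        simp only [mul_pow, ← pow_mul]
        ring
      rw [e2, show 4 * k = 2 * (l + 1) + 2 * j by omega, coeff_X_pow_mul, coeff_C_mul]
      rw [e] at hres
      have hm : ((2 * (l + 1) : ℕ) : ℚ⟦X⟧) = C ((2 * (l + 1) : ℕ) : ℚ) :=
        (map_natCast C _).symm
      rw [hm, coeff_C_mul] at hres
      rcases mul_eq_zero.1 hres with h | h
      · exfalso
        have : 2 * (l + 1) = 0 := by exact_mod_cast h
        omega
      · rw [h, mul_zero]

end SeriesAux

open PowerSeries in
lemma exists_min_odd (k : ℕ) {D : Submodule (ZMod 2) (Fin (24 * k + 8) → ZMod 2)}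
    (h : IsSelfDual D) (h4 : ∀ y ∈ D, 4 ∣ wt y) (hmin : ∀ y ∈ D, y ≠ 0 → 4 * k + 4 ≤ wt y)
    (x : Fin (24 * k + 8) → ZMod 2) (hx1 : x ⬝ᵥ 1 = 0) (hx : ∀ d ∈ D, 4 * k + 2 ≤ wt (x + d)) :
    ∃ y ∈ D, x ⬝ᵥ y = 1 ∧ wt y = 4 * k + 4 := by
  classical
  by_contra hcon
  push Not at hcon
  obtain ⟨H, hHpos, hH⟩ := exists_functional k
  have h1D := selfDual_one h
  have : CharZero ℚ⟦X⟧ := algebraRat.charZero _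
  have m0 := macWilliams ℚ⟦X⟧ h 0 X
  have mx := macWilliams ℚ⟦X⟧ h x X
  set F : D → ℚ⟦X⟧ := fun y => (1 + X) ^ (24 * k + 8 - wt y.1) * (1 - X) ^ wt y.1 with hF
  simp only [zero_dotProduct, sgn_zero, one_mul, zero_add] at m0
  -- weights of odd words
  have hwt : ∀ y ∈ D, x ⬝ᵥ y = 1 → 4 * k + 8 ≤ wt y := by
    intro y hy hxy
    have hy0 : y ≠ 0 := by rintro rfl; simp at hxy
    have a := hmin y hy hy0
    have b := h4 y hy
    have c := hcon y hy hxy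
    omega
  have hodd : ∀ y : D, coeff (4 * k)
      ((1 - sgn ℚ⟦X⟧ (x ⬝ᵥ y.1)) * (F y + F (y + ⟨1, h1D⟩)) * H) = 0 := by
    intro y
    rcases zmod2_cases (x ⬝ᵥ y.1) with h0 | h1
    · rw [h0, sgn_zero]; simp
    · have w1 := hwt y.1 y.2 h1
      have w2 := hwt (y.1 + 1) (D.add_mem y.2 h1D) (by rw [dotProduct_add, hx1, h1, add_zero])
      have w3 := wt_compl y.1
      have w4 := h4 y.1 y.2
      obtain ⟨b, hb⟩ : ∃ b, wt y.1 = 4 * k + 8 + 4 * b := ⟨(wt y.1 - (4 * k + 8)) / 4, by omega⟩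
      obtain ⟨a, ha⟩ : ∃ a, wt (y.1 + 1) = 4 * k + 8 + 4 * a :=
        ⟨(wt (y.1 + 1) - (4 * k + 8)) / 4, by omega⟩
      have hab : a + b + 2 = 4 * k := by omega
      have hs : (1 - sgn ℚ⟦X⟧ (x ⬝ᵥ y.1)) = C (2 : ℚ) := by
        rw [h1, map_ofNat]; simp [sgn]; norm_num
      have e : F y + F (y + ⟨1, h1D⟩) = (1 - X ^ 2) ^ (4 * k + 8) *
          (((1 + X) ^ 4) ^ a * ((1 - X) ^ 4) ^ b + ((1 + X) ^ 4) ^ b * ((1 - X) ^ 4) ^ a) := by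
        simp only [hF, Submodule.coe_add]
        rw [show 24 * k + 8 - wt y.1 = 4 * k + 8 + 4 * a by omega,
          show 24 * k + 8 - wt (y.1 + 1) = 4 * k + 8 + 4 * b by omega, ha, hb,
          show (1 - X ^ 2 : ℚ⟦X⟧) = (1 + X) * (1 - X) by ring]
        generalize (1 + X : ℚ⟦X⟧) = u
        generalize (1 - X : ℚ⟦X⟧) = v
        rw [mul_pow]
        simp only [pow_add, pow_mul]
        ring
      rw [hs, e, mul_assoc, coeff_C_mul, hH a b hab, mul_zero]
  have hsum : coeff (4 * k) ((∑ y : D, (1 - sgn ℚ⟦X⟧ (x ⬝ᵥ y.1)) * F y) * H) = 0 := by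
    have hre : ∑ y : D, (1 - sgn ℚ⟦X⟧ (x ⬝ᵥ y.1)) * F y
        = ∑ y : D, (1 - sgn ℚ⟦X⟧ (x ⬝ᵥ y.1)) * F (y + ⟨1, h1D⟩) := by
      rw [← Equiv.sum_comp (Equiv.addRight (⟨1, h1D⟩ : D))]
      refine Finset.sum_congr rfl fun y _ => ?_
      simp only [Equiv.coe_addRight, Submodule.coe_add, dotProduct_add, hx1, add_zero]
    have h2 : coeff (4 * k) ((∑ y : D, (1 - sgn ℚ⟦X⟧ (x ⬝ᵥ y.1)) * F y) * H)
        + coeff (4 * k) ((∑ y : D, (1 - sgn ℚ⟦X⟧ (x ⬝ᵥ y.1)) * F y) * H) = 0 := by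
      nth_rewrite 2 [hre]
      rw [← map_add, ← add_mul, ← Finset.sum_add_distrib, Finset.sum_mul, map_sum]
      refine Finset.sum_eq_zero fun y _ => ?_
      rw [← mul_add]
      exact hodd y
    linarith
  have hval : ∑ y : D, (1 - sgn ℚ⟦X⟧ (x ⬝ᵥ y.1)) * F y
      = (Fintype.card D : ℚ⟦X⟧) * (∑ c : D, X ^ wt c.1 - ∑ c : D, X ^ wt (x + c.1)) := by
    rw [mul_sub, ← m0, ← mx, ← Finset.sum_sub_distrib]
    exact Finset.sum_congr rfl fun y _ => by ring
  have hc : (Fintype.card D : ℚ⟦X⟧) = C (Fintype.card D : ℚ) := (map_natCast C _).symm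
  rw [hval, hc, mul_assoc, coeff_C_mul, sub_mul, map_sub, Finset.sum_mul, Finset.sum_mul,
    map_sum, map_sum, Finset.sum_eq_single (0 : D), Finset.sum_eq_zero] at hsum
  · rw [Submodule.coe_zero, wt_zero, pow_zero, one_mul, sub_zero] at hsum
    rcases mul_eq_zero.1 hsum with h0 | h0
    · have : Fintype.card D = 0 := by exact_mod_cast h0
      exact Fintype.card_ne_zero this
    · exact hHpos.ne' h0
  · intro c _
    rw [coeff_X_pow_mul', if_neg]
    have := hx c.1 c.2
    omega
  · intro c _ hc0
    rw [coeff_X_pow_mul', if_neg]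
    have := hmin c.1 c.2 fun h => hc0 (Subtype.ext h)
    omega
  · simp

lemma minWtSet_eq {n : ℕ} {S : Set (Fin n → ZMod 2)} {m : ℕ} (hm : ∀ x ∈ S, x ≠ 0 → m ≤ wt x)
    {x : Fin n → ZMod 2} (hx : x ∈ S) (hx0 : x ≠ 0) (hxm : wt x = m) : minWtSet S = m := by
  apply le_antisymm
  · exact Nat.sInf_le ⟨x, hx, hx0, hxm⟩
  · refine le_csInf (s := {w | ∃ x ∈ S, x ≠ 0 ∧ wt x = w}) ⟨m, x, hx, hx0, hxm⟩ ?_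
    rintro w ⟨y, hy, hy0, rfl⟩
    exact hm y hy hy0

lemma minWtSet_le {n : ℕ} {S : Set (Fin n → ZMod 2)} {x : Fin n → ZMod 2} (hx : x ∈ S)
    (hx0 : x ≠ 0) : minWtSet S ≤ wt x := Nat.sInf_le ⟨x, hx, hx0, rfl⟩

lemma minWt_le {n : ℕ} {C : Submodule (ZMod 2) (Fin n → ZMod 2)} {x : Fin n → ZMod 2} (hx : x ∈ C)
    (hx0 : x ≠ 0) : minWt C ≤ wt x := Nat.sInf_le ⟨x, hx, hx0, rfl⟩

lemma minWtSet_mem {n : ℕ} {S : Set (Fin n → ZMod 2)} (h : minWtSet S ≠ 0) :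
    ∃ x ∈ S, x ≠ 0 ∧ wt x = minWtSet S := by
  have hne : {w | ∃ x ∈ S, x ≠ 0 ∧ wt x = w}.Nonempty := by
    rw [Set.nonempty_iff_ne_empty]
    intro he
    exact h (by rw [minWtSet, he, Nat.sInf_empty])
  exact Nat.sInf_mem hne

/-- distance to a code -/
noncomputable def dcode {n : ℕ} (S : Set (Fin n → ZMod 2)) (x : Fin n → ZMod 2) : ℕ :=
  sInf {d | ∃ c ∈ S, hammingDist x c = d}

lemma dcode_le {n : ℕ} {S : Set (Fin n → ZMod 2)} {x c : Fin n → ZMod 2} (hc : c ∈ S) :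
    dcode S x ≤ wt (x + c) := Nat.sInf_le ⟨c, hc, dist_eq x c⟩

lemma dcode_mem {n : ℕ} (D : Submodule (ZMod 2) (Fin n → ZMod 2)) (x : Fin n → ZMod 2) :
    ∃ c ∈ D, wt (x + c) = dcode (D : Set (Fin n → ZMod 2)) x := by
  have hne : {d | ∃ c ∈ (D : Set (Fin n → ZMod 2)), hammingDist x c = d}.Nonempty :=
    ⟨hammingDist x 0, 0, D.zero_mem, rfl⟩
  obtain ⟨c, hc, h⟩ := Nat.sInf_mem hne
  exact ⟨c, hc, by rw [← dist_eq]; exact h⟩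

lemma coveringRadius_bdd {n : ℕ} (S : Set (Fin n → ZMod 2)) : BddAbove (Set.range (dcode S)) :=
  (Set.finite_range _).bddAbove

lemma coveringRadius_mem {n : ℕ} (S : Set (Fin n → ZMod 2)) :
    ∃ x, dcode S x = coveringRadius S :=
  Nat.sSup_mem (Set.range_nonempty (dcode S)) (coveringRadius_bdd S)

lemma forward (k : ℕ) (C : Submodule (ZMod 2) (Fin (24 * k + 8) → ZMod 2))
    (hC : IsSExtremal C) (hm : minWt C = 4 * k + 2) :
    ∃ D : Submodule (ZMod 2) (Fin (24 * k + 8) → ZMod 2),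
      IsSelfDual D ∧ (∀ x ∈ D, 4 ∣ wt x) ∧
      Module.finrank (ZMod 2) D = 12 * k + 4 ∧ minWt D = 4 * k + 4 ∧
      coveringRadius (D : Set (Fin (24 * k + 8) → ZMod 2)) = 4 * k + 2 := by
  obtain ⟨⟨hsd, x0, hx0, hx04⟩, hS⟩ := hC
  have hS' : minWtSet (shadow C) = 4 * k + 4 := by
    rw [hm] at hS; push_cast at hS; omega
  obtain ⟨t, ⟨ht, htC⟩, ht0, htw⟩ := minWtSet_mem (S := shadow C) (by omega)
  rw [hS'] at htw
  have htC : t ∉ C := htC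
  have ht : ∀ y ∈ C, 4 ∣ wt y → t ⬝ᵥ y = 0 := fun y hy hy4 => ht y ⟨hy, hy4⟩
  -- on `C`, doubly even iff orthogonal to `t`
  have hC0 : ∀ y ∈ C, t ⬝ᵥ y = 0 → 4 ∣ wt y := by
    intro y hy hty
    by_contra hy4
    apply htC
    rw [selfDual_mem hsd]
    intro z hz
    by_cases hz4 : 4 ∣ wt z
    · exact ht z hz hz4
    · have hi : 2 ∣ inter z y := by
        rw [← even_iff_cast, inter_cast]; exact (selfDual_mem hsd z).1 hz y hy
      have a1 := wt_add z y
      have a2 := selfDual_even hsd hz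
      have a3 := selfDual_even hsd hy
      have := ht (z + y) (C.add_mem hz hy) (by omega)
      rwa [dotProduct_add, hty, add_zero] at this
  have htt : t ⬝ᵥ t = 0 := by rw [← wt_cast, even_iff_cast]; omega
  have hCmin : ∀ y ∈ C, y ≠ 0 → 4 * k + 2 ≤ wt y := fun y hy hy0 =>
    hm ▸ minWt_le hy hy0
  have hDsd := nbr_selfDual hsd t htt
  have hD4 : ∀ y ∈ nbr C t, 4 ∣ wt y := by
    rintro y ⟨hty, hy⟩
    rcases hy with hy | hy
    · exact hC0 y hy hty
    · have h1 : t ⬝ᵥ (y + t) = 0 := by rw [dotProduct_add, hty, htt, add_zero]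
      have h2 := hC0 _ hy h1
      have h3 := wt_add (y + t) t
      rw [vadd_cancel] at h3
      have hi : 2 ∣ inter (y + t) t := by
        rw [← even_iff_cast, inter_cast, dotProduct_comm, h1]
      omega
  -- shadow-type vectors
  have hsh : ∀ y, (∀ c ∈ C, t ⬝ᵥ c = 0 → y ⬝ᵥ c = 0) → y ∉ C → 4 * k + 4 ≤ wt y := by
    intro y hy hyC
    rw [← hS']
    refine minWtSet_le (S := shadow C) ⟨fun c hc => hy c hc.1 (ht c hc.1 hc.2), hyC⟩ ?_
    rintro rfl
    exact hyC C.zero_mem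
  have hperp : ∀ y, y + t ∈ C → ∀ c ∈ C, t ⬝ᵥ c = 0 → y ⬝ᵥ c = 0 := by
    intro y hy c hc htc
    have := (selfDual_mem hsd _).1 hy c hc
    rwa [add_dotProduct, htc, add_zero] at this
  have hnot : ∀ y, y + t ∈ C → y ∉ C := by
    intro y hy hyC
    apply htC
    have := C.add_mem hyC hy
    rwa [← add_assoc, vadd_self, zero_add] at this
  have hDmin : ∀ y ∈ nbr C t, y ≠ 0 → 4 * k + 4 ≤ wt y := by
    rintro y hyD hy0
    rcases hyD.2 with hy | hy
    · have := hCmin y hy hy0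
      have := hD4 y hyD
      omega
    · exact hsh y (hperp y hy) (hnot y hy)
  have htD : t ∈ nbr C t := ⟨htt, Or.inr (by rw [vadd_self]; exact C.zero_mem)⟩
  refine ⟨nbr C t, hDsd, hD4, ?_, minWtSet_eq hDmin htD ht0 htw, ?_⟩
  · have := selfDual_finrank hDsd
    omega
  · apply le_antisymm
    · apply csSup_le (Set.range_nonempty _)
      rintro _ ⟨x, rfl⟩
      change dcode _ x ≤ _
      have h1D := selfDual_one hDsd
      obtain ⟨c, hc, hle⟩ := delsarte hDsd
        (insert (24 * k + 8) ((Finset.Icc (k + 1) (5 * k + 1)).image fun i => 4 * i))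
        (by simp) (by
          intro y hy hy0
          have a1 := hDmin y hy hy0
          have a2 := hD4 y hy
          have a3 := wt_compl y
          rw [Finset.mem_insert, Finset.mem_image]
          by_cases hy1 : y + 1 = 0
          · left
            rw [hy1, wt_zero] at a3
            omega
          · right
            have := hDmin _ (Submodule.add_mem _ hy h1D) hy1
            exact ⟨wt y / 4, by rw [Finset.mem_Icc]; omega, by omega⟩) x
      refine (dcode_le hc).trans (hle.trans ?_)
      refine (Finset.card_insert_le _ _).trans ?_
      have := Finset.card_image_le (s := Finset.Icc (k + 1) (5 * k + 1)) (f := fun i => 4 * i)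
      rw [Nat.card_Icc] at this
      omega
    · refine le_trans ?_ (le_csSup (coveringRadius_bdd _) ⟨x0, rfl⟩)
      obtain ⟨c, hc, hce⟩ := dcode_mem (nbr C t) x0
      change _ ≤ dcode _ x0
      rw [← hce]
      rcases hc.2 with hc' | hc'
      · apply hCmin _ (C.add_mem hx0 hc')
        intro h0
        have : x0 = c := by
          have := vadd_cancel x0 c
          rw [h0, zero_add] at this
          exact this.symm
        exact hx04 (this ▸ hD4 c hc)
      · have hy : x0 + c + t ∈ C := by rw [add_assoc]; exact C.add_mem hx0 hc'
        have := hsh _ (hperp _ hy) (hnot _ hy)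
        omega

lemma backward (k : ℕ) (D : Submodule (ZMod 2) (Fin (24 * k + 8) → ZMod 2))
    (hsd : IsSelfDual D) (h4 : ∀ x ∈ D, 4 ∣ wt x) (hm : minWt D = 4 * k + 4)
    (hcr : coveringRadius (D : Set (Fin (24 * k + 8) → ZMod 2)) = 4 * k + 2) :
    ∃ C : Submodule (ZMod 2) (Fin (24 * k + 8) → ZMod 2),
      IsSExtremal C ∧ Module.finrank (ZMod 2) C = 12 * k + 4 ∧ minWt C = 4 * k + 2 := by
  obtain ⟨x', hx'⟩ := coveringRadius_mem (D : Set (Fin (24 * k + 8) → ZMod 2))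
  obtain ⟨c, hc, hce⟩ := dcode_mem D x'
  rw [hx', hcr] at hce
  set x := x' + c with hxdef
  have hx : ∀ d ∈ D, 4 * k + 2 ≤ wt (x + d) := by
    intro d hd
    rw [← hcr, ← hx', hxdef, add_assoc]
    exact dcode_le (S := (D : Set (Fin (24 * k + 8) → ZMod 2))) (D.add_mem hc hd)
  have hmin : ∀ y ∈ D, y ≠ 0 → 4 * k + 4 ≤ wt y := fun y hy hy0 =>
    hm ▸ minWt_le hy hy0
  have hx1 : x ⬝ᵥ 1 = 0 := by rw [← wt_cast_one, even_iff_cast]; omega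
  have hxx : x ⬝ᵥ x = 0 := by rw [← wt_cast, even_iff_cast]; omega
  obtain ⟨y, hy, hxy, hyw⟩ := exists_min_odd k hsd h4 hmin x hx1 hx
  have hCsd := nbr_selfDual hsd x hxx
  have hxC : x ∈ nbr D x := ⟨hxx, Or.inr (by rw [vadd_self]; exact D.zero_mem)⟩
  have hx0 : x ≠ 0 := by
    intro h0; rw [h0, wt_zero] at hce; omega
  have hcos : ∀ z, z + x ∈ D → 4 * k + 2 ≤ wt z := by
    intro z hz
    have := hx _ hz
    rwa [add_comm z x, ← add_assoc, vadd_self, zero_add] at this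
  have hCmin : minWt (nbr D x) = 4 * k + 2 := by
    refine minWtSet_eq ?_ hxC hx0 hce
    rintro z ⟨_, hz⟩ hz0
    rcases hz with hz | hz
    · have := hmin z hz hz0
      omega
    · exact hcos z hz
  have hwx : ∀ z, z + x ∈ D → ∃ d, wt z + 2 * d = 4 * k + 2 + wt (z + x) ∧
      ((d : ℕ) : ZMod 2) = x ⬝ᵥ z := by
    intro z hz
    refine ⟨inter (z + x) x, ?_, ?_⟩
    · have := wt_add (z + x) x
      rw [vadd_cancel] at this
      omega
    · rw [inter_cast, dotProduct_comm, dotProduct_add, hxx, add_zero]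
  refine ⟨nbr D x, ⟨⟨hCsd, x, hxC, by omega⟩, ?_⟩, ?_, hCmin⟩
  · have : minWtSet (shadow (nbr D x)) = 4 * k + 4 := by
      refine minWtSet_eq (x := y) ?_ ?_ ?_ hyw
      · rintro z ⟨hz, hzC⟩ hz0
        have hzC : ¬ (x ⬝ᵥ z = 0 ∧ (z ∈ D ∨ z + x ∈ D)) := hzC
        have hz' := dual_hyper hsd x z fun d hd hxd => hz d ⟨⟨hxd, Or.inl hd⟩, h4 d hd⟩
        have hxz : x ⬝ᵥ z ≠ 0 := fun h => hzC ⟨h, hz'⟩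
        rcases hz' with hz' | hz'
        · exact hmin z hz' hz0
        · have b1 := hcos z hz'
          obtain ⟨d, hd, hd'⟩ := hwx z hz'
          have b2 := h4 _ hz'
          have b3 : ¬ 2 ∣ d := by rw [← even_iff_cast, hd']; exact hxz
          omega
      · refine ⟨?_, ?_⟩
        · rintro d ⟨⟨hxd, hd⟩, hd4⟩
          rcases hd with hd | hd
          · exact (selfDual_mem hsd y).1 hy d hd
          · exfalso
            obtain ⟨e, he, he'⟩ := hwx d hd
            have b2 := h4 _ hd
            have b3 : 2 ∣ e := by rw [← even_iff_cast, he']; exact hxd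
            omega
        · rintro ⟨h0, _⟩
          rw [h0] at hxy
          exact absurd hxy (by decide)
      · rintro rfl
        rw [wt_zero] at hyw
        omega
    rw [this, hCmin]
    push_cast
    omega
  · have := selfDual_finrank hCsd
    omega

/-- There exists an s-extremal singly even self-dual `[24k+8, 12k+4, 4k+2]` code if and
only if there exists a doubly even self-dual `[24k+8, 12k+4, 4k+4]` code with covering
radius `4k+2`. -/
theorem sExtremal_iff_coveringRadius (k : ℕ) :
    (∃ C : Submodule (ZMod 2) (Fin (24 * k + 8) → ZMod 2),
      IsSExtremal C ∧ Module.finrank (ZMod 2) C = 12 * k + 4 ∧ minWt C = 4 * k + 2) ↔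
    (∃ D : Submodule (ZMod 2) (Fin (24 * k + 8) → ZMod 2),
      IsSelfDual D ∧ (∀ x ∈ D, 4 ∣ wt x) ∧
      Module.finrank (ZMod 2) D = 12 * k + 4 ∧ minWt D = 4 * k + 4 ∧
      coveringRadius (D : Set (Fin (24 * k + 8) → ZMod 2)) = 4 * k + 2) := by
  constructor
  · rintro ⟨C, hC, _, hm⟩
    exact forward k C hC hm
  · rintro ⟨D, h1, h2, _, h3, h4⟩
    exact backward k D h1 h2 h3 h4
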